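/- Let 2 ≤ s < S < p/2, let u > 1, and set t = s·max{ √(4u·log(s·C(S,s))/(n(p−S))), 8u·log(s·C(S,s))/(n(p−S)) }, where C(S,s) denotes the binomial coefficient 'S choose s'. Consider the test Δ that rejects if and only if there exists a subset 𝐒 ⊆ {1,…,S} with |𝐒| = s such that ∑_{j∈𝐒} |Tr(A_j(Σ_n − I_p))| ≥ t. If σ ≥ t + max{ √(4(u−1)·log(s(2s+1)·C(S,s))/(n(p−S))), 8(u−1)·log(s(2s+1)·C(S,s))/(n(p−S)) }, then P_{I_p}[Δ rejects] + sup_{Σ ∈ F(s,S,σ)} P_Σ[Δ accepts] ≤ 4·exp(−(u−1)·log(s·C(S,s))), where P_{I_p} (resp. P_Σ) denotes the law of Σ_n when X_1,…,X_n are i.i.d. N_p(0, I_p) (resp. N_p(0, Σ)). -/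

import Mathlib

open MeasureTheory Matrix Real
open scoped ENNReal BigOperators NNReal

noncomputable def gaussianPDF {p : ℕ} (C : Matrix (Fin p) (Fin p) ℝ) (x : Fin p → ℝ) : ℝ≥0∞ :=
  ENNReal.ofReal ((2 * Real.pi) ^ (-(p : ℝ) / 2) * C.det ^ (-(1:ℝ)/2) *
    Real.exp (-(1/2) * (x ⬝ᵥ C⁻¹.mulVec x)))

/-- The centered multivariate Gaussian measure `N_p(0, C)` on `Fin p → ℝ`. -/
noncomputable def gaussianMeasure {p : ℕ} (C : Matrix (Fin p) (Fin p) ℝ) :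
    Measure (Fin p → ℝ) :=
  MeasureTheory.volume.withDensity (gaussianPDF C)

/-- The law of `n` i.i.d. `N_p(0, C)` vectors. -/
noncomputable def iidGaussian (n p : ℕ) (C : Matrix (Fin p) (Fin p) ℝ) :
    Measure (Fin n → Fin p → ℝ) :=
  MeasureTheory.volume.withDensity fun X => ∏ k, gaussianPDF C (X k)

/-- The sample covariance matrix `Σ_n = (1/n) ∑ X_k X_kᵀ`. -/
noncomputable def sampleCov {n p : ℕ} (X : Fin n → Fin p → ℝ) :
    Matrix (Fin p) (Fin p) ℝ :=
  (n : ℝ)⁻¹ • ∑ k, Matrix.of fun i j => X k i * X k j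

/-- Frobenius norm of a matrix. -/
noncomputable def frobNorm {p : ℕ} (M : Matrix (Fin p) (Fin p) ℝ) : ℝ :=
  Real.sqrt (∑ i, ∑ j, (M i j)^2)

/-- Spectral (ℓ²-operator) norm of a matrix. -/
noncomputable def specNorm {p : ℕ} (M : Matrix (Fin p) (Fin p) ℝ) : ℝ :=
  ‖Matrix.toEuclideanCLM (𝕜 := ℝ) M‖

/-- The matrix `A_j` with entries `1/(2(p-j))` on the `j`-th upper and lower diagonals. -/
noncomputable def lagMatrix (p j : ℕ) : Matrix (Fin p) (Fin p) ℝ :=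
  Matrix.of fun k l => if ((k:ℤ) - (l:ℤ)).natAbs = j then 1/(2*((p:ℝ) - j)) else 0

/-- Two-sided class `F(s,S,σ)` of sparse Toeplitz covariance matrices with
diagonal value `σ0`. -/
def memF (p s S : ℕ) (σ σ0 : ℝ) (C : Matrix (Fin p) (Fin p) ℝ) : Prop :=
  C.PosDef ∧ ∃ v : ℕ → ℝ, v 0 = σ0 ∧
    (∀ i j : Fin p, C i j = v ((i:ℤ) - (j:ℤ)).natAbs) ∧
    ∃ T : Finset ℕ, T ⊆ Finset.Icc 1 S ∧ T.card = s ∧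
      (∀ j ∈ T, σ ≤ |v j|) ∧ (∀ j, 1 ≤ j → j ≤ p - 1 → j ∉ T → v j = 0)

/-- One-sided class `F₊(s,S,σ)` of sparse Toeplitz covariance matrices with
diagonal value `σ0`. -/
def memFplus (p s S : ℕ) (σ σ0 : ℝ) (C : Matrix (Fin p) (Fin p) ℝ) : Prop :=
  C.PosDef ∧ ∃ v : ℕ → ℝ, v 0 = σ0 ∧
    (∀ i j : Fin p, C i j = v ((i:ℤ) - (j:ℤ)).natAbs) ∧
    ∃ T : Finset ℕ, T ⊆ Finset.Icc 1 S ∧ T.card = s ∧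
      (∀ j ∈ T, σ ≤ v j) ∧ (∀ j, 1 ≤ j → j ≤ p - 1 → j ∉ T → v j = 0)


/-- A lower bound for the logarithm around `1`, with the sharp quadratic coefficient. -/
lemma sub_sq_div_le_log_one_add {w β : ℝ} (hw : |w| ≤ β) (hβ : β < 1) :
    w - w ^ 2 / (2 * (1 - β)) ≤ Real.log (1 + w) := by
  have hβ0 : 0 ≤ β := (abs_nonneg w).trans hw
  have hpos : 0 < 1 - β := by linarith
  obtain ⟨hw1, hw2⟩ := abs_le.1 hw
  rcases le_total 0 w with h | h
  · have h1 := Real.le_log_one_add_of_nonneg h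
    have h2 : w ^ 2 / 2 ≤ w ^ 2 / (2 * (1 - β)) := by
      apply div_le_div_of_nonneg_left (sq_nonneg w) (by linarith); linarith
    have h3 : w - w ^ 2 / 2 ≤ 2 * w / (w + 2) := by
      rw [le_div_iff₀ (by linarith)]
      nlinarith [pow_nonneg h 3]
    linarith
  · have hy : 0 < 1 + w := by linarith
    have h1 : Real.log (1 + w)⁻¹ ≤ Real.sinh (Real.log (1 + w)⁻¹) := by
      rw [Real.self_le_sinh_iff]
      exact Real.log_nonneg ((one_le_inv₀ hy).2 (by linarith))
    rw [Real.sinh_log (inv_pos.2 hy), Real.log_inv, inv_inv] at h1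
    have h2 : w ^ 2 / (2 * (1 + w)) ≤ w ^ 2 / (2 * (1 - β)) := by
      apply div_le_div_of_nonneg_left (sq_nonneg w) (by linarith); linarith
    have h3 : ((1 + w)⁻¹ - (1 + w)) / 2 = -w + w ^ 2 / (2 * (1 + w)) := by
      field_simp; ring
    linarith

lemma inv_sqrt_one_add_le_exp {w β : ℝ} (hw : |w| ≤ β) (hβ : β < 1) :
    (Real.sqrt (1 + w))⁻¹ ≤ Real.exp (-(w / 2) + w ^ 2 / (4 * (1 - β))) := by
  have hy : 0 < 1 + w := by linarith [(abs_le.1 hw).1]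
  have hpos : 0 < 1 - β := by linarith
  have h := sub_sq_div_le_log_one_add hw hβ
  have hs : 0 < Real.sqrt (1 + w) := Real.sqrt_pos.2 hy
  rw [← Real.log_le_iff_le_exp (inv_pos.2 hs), Real.log_inv, Real.log_sqrt hy.le]
  have : w ^ 2 / (4 * (1 - β)) = (w ^ 2 / (2 * (1 - β))) / 2 := by
    field_simp; ring
  rw [this]; linarith

lemma lintegral_ofReal_prod {ι E : Type*} [Fintype ι] [MeasureSpace E]
    [SigmaFinite (volume : Measure E)] {g : ι → E → ℝ} (hg : ∀ i x, 0 ≤ g i x)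
    (hint : ∀ i, Integrable (g i)) :
    ∫⁻ x : ι → E, ENNReal.ofReal (∏ i, g i (x i)) = ENNReal.ofReal (∏ i, ∫ x, g i x) := by
  rw [← integral_fintype_prod_volume_eq_prod]
  exact (ofReal_integral_eq_lintegral_ofReal (Integrable.fintype_prod hint)
    (Filter.Eventually.of_forall fun x => Finset.prod_nonneg fun i _ => hg i _)).symm

/-- A positive definite and a symmetric matrix are simultaneously diagonalised by congruence. -/
lemma exists_congruence_diagonal {p : ℕ} {C B : Matrix (Fin p) (Fin p) ℝ}
    (hC : C.PosDef) (hB : B.IsHermitian) :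
    ∃ (W : Matrix (Fin p) (Fin p) ℝ) (d : Fin p → ℝ),
      W * Wᵀ = C ∧ Wᵀ * B * W = Matrix.diagonal d := by
  obtain ⟨H, hH⟩ : ∃ H : Matrix (Fin p) (Fin p) ℝ, H * Hᵀ = C := by
    have h := hC.1.spectral_theorem
    rw [Unitary.conjStarAlgAut_apply] at h
    refine ⟨(hC.1.eigenvectorUnitary : Matrix (Fin p) (Fin p) ℝ) *
      Matrix.diagonal (fun i => Real.sqrt (hC.1.eigenvalues i)), ?_⟩
    conv_rhs => rw [h]
    rw [Matrix.transpose_mul, Matrix.diagonal_transpose, Matrix.mul_assoc,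
      ← Matrix.mul_assoc (Matrix.diagonal _), Matrix.diagonal_mul_diagonal, Matrix.mul_assoc]
    congr 2
    congr 1
    funext i
    simpa using Real.mul_self_sqrt (hC.eigenvalues_pos i).le
  have hD : (Hᵀ * B * H).IsHermitian := by
    rw [← Matrix.conjTranspose_eq_transpose_of_trivial]
    exact Matrix.isHermitian_conjTranspose_mul_mul _ hB
  have h := hD.conjStarAlgAut_star_eigenvectorUnitary
  rw [Unitary.conjStarAlgAut_apply] at h
  set U := hD.eigenvectorUnitary with hU
  have hUU : (U : Matrix (Fin p) (Fin p) ℝ) * (U : Matrix (Fin p) (Fin p) ℝ)ᵀ = 1 := by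
    have := Unitary.coe_mul_star_self U
    rwa [Unitary.coe_star, Matrix.star_eq_conjTranspose,
      Matrix.conjTranspose_eq_transpose_of_trivial] at this
  refine ⟨H * U, hD.eigenvalues, ?_, ?_⟩
  · rw [Matrix.transpose_mul, Matrix.mul_assoc, ← Matrix.mul_assoc _ _ Hᵀ, hUU, Matrix.one_mul, hH]
  · rw [Matrix.transpose_mul]
    simp only [Unitary.coe_star, Matrix.star_eq_conjTranspose,
      Matrix.conjTranspose_eq_transpose_of_trivial] at h
    simp only [Matrix.mul_assoc, Matrix.transpose_transpose] at h ⊢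
    rw [h]
    rfl

/-- Exponential moment of a quadratic form of a Gaussian vector. -/
lemma lintegral_gaussianPDF_mul_exp {p : ℕ} {C B W : Matrix (Fin p) (Fin p) ℝ} {d : Fin p → ℝ}
    (hC : C.PosDef) (hW : W * Wᵀ = C) (hd : Wᵀ * B * W = Matrix.diagonal d) {θ : ℝ}
    (hθ : ∀ i, 0 < 1 + 2 * θ * d i) :
    ∫⁻ x, gaussianPDF C x * ENNReal.ofReal (Real.exp (-θ * (x ⬝ᵥ B *ᵥ x))) =
      ENNReal.ofReal (∏ i, (Real.sqrt (1 + 2 * θ * d i))⁻¹) := by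
  have hCdet := hC.det_pos
  have hdetsq : W.det ^ 2 = C.det := by rw [← hW, Matrix.det_mul, Matrix.det_transpose, sq]
  have hWdet : W.det ≠ 0 := by
    intro h; rw [h] at hdetsq; norm_num at hdetsq; linarith
  have hWu : IsUnit W.det := isUnit_iff_ne_zero.2 hWdet
  have hinv : Wᵀ * C⁻¹ * W = 1 := by
    rw [← hW, Matrix.mul_inv_rev, ← Matrix.mul_assoc, Matrix.mul_nonsing_inv _ (by simpa using hWu),
      Matrix.one_mul, Matrix.nonsing_inv_mul _ hWu]
  have hquad : ∀ (M : Matrix (Fin p) (Fin p) ℝ) (y : Fin p → ℝ),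
      (W *ᵥ y) ⬝ᵥ M *ᵥ (W *ᵥ y) = y ⬝ᵥ (Wᵀ * M * W) *ᵥ y := by
    intro M y
    rw [← Matrix.mulVec_mulVec, ← Matrix.mulVec_mulVec, Matrix.dotProduct_mulVec y Wᵀ,
      Matrix.vecMul_transpose]
  set c : ℝ := (2 * Real.pi) ^ (-(p : ℝ) / 2) * C.det ^ (-(1:ℝ)/2) with hc
  have hc0 : 0 ≤ c := by positivity
  set F : (Fin p → ℝ) → ℝ≥0∞ :=
    fun x => gaussianPDF C x * ENNReal.ofReal (Real.exp (-θ * (x ⬝ᵥ B *ᵥ x))) with hF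
  have hFW : ∀ y, F (Matrix.toLin' W y) =
      ENNReal.ofReal c * ENNReal.ofReal (∏ i, Real.exp (-((1 + 2 * θ * d i) / 2) * y i ^ 2)) := by
    intro y
    simp only [hF, gaussianPDF, Matrix.toLin'_apply, hquad, hinv, hd]
    rw [ENNReal.ofReal_mul hc0, mul_assoc, ← ENNReal.ofReal_mul (Real.exp_nonneg _),
      ← Real.exp_add, ← Real.exp_sum]
    congr 3
    simp only [Matrix.one_mulVec, dotProduct, Matrix.mulVec_diagonal, Finset.mul_sum,
      ← Finset.sum_add_distrib]
    exact Finset.sum_congr rfl fun i _ => by ring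
  have hFm : Measurable F := by
    simp only [hF, gaussianPDF, dotProduct, Matrix.mulVec]
    fun_prop
  have hmap := Real.map_matrix_volume_pi_eq_smul_volume_pi hWdet
  have hlin : Measurable (Matrix.toLin' W) :=
    (LinearMap.continuous_on_pi (Matrix.toLin' W)).measurable
  have h1 : ∫⁻ x, F x ∂(Measure.map (Matrix.toLin' W) volume) = ∫⁻ y, F (Matrix.toLin' W y) :=
    lintegral_map hFm hlin
  rw [hmap, lintegral_smul_measure] at h1
  simp only [hFW] at h1
  rw [lintegral_const_mul' _ _ ENNReal.ofReal_ne_top, lintegral_ofReal_prod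
    (g := fun i y => Real.exp (-((1 + 2 * θ * d i) / 2) * y ^ 2))
    (fun _ _ => Real.exp_nonneg _)
    (fun i => integrable_exp_neg_mul_sq (by linarith [hθ i]))] at h1
  simp only [integral_gaussian] at h1
  have h2 : ∏ i, Real.sqrt (Real.pi / ((1 + 2 * θ * d i) / 2)) =
      Real.sqrt (2 * Real.pi) ^ p * ∏ i, (Real.sqrt (1 + 2 * θ * d i))⁻¹ := by
    have hpow : Real.sqrt (2 * Real.pi) ^ p = ∏ _i : Fin p, Real.sqrt (2 * Real.pi) := by simp
    rw [hpow, ← Finset.prod_mul_distrib]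
    refine Finset.prod_congr rfl fun i _ => ?_
    rw [← Real.sqrt_inv, ← Real.sqrt_mul (by positivity)]
    congr 1
    have := (hθ i).ne'
    field_simp
  have h3 : |W.det| * c * Real.sqrt (2 * Real.pi) ^ p = 1 := by
    have e1 : |W.det| = C.det ^ ((1:ℝ)/2) := by
      rw [← Real.sqrt_eq_rpow, ← hdetsq, Real.sqrt_sq_eq_abs]
    have e2 : Real.sqrt (2 * Real.pi) ^ p = (2 * Real.pi) ^ ((p : ℝ) / 2) := by
      rw [Real.sqrt_eq_rpow, ← Real.rpow_natCast, ← Real.rpow_mul (by positivity)]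
      congr 1; ring
    rw [e1, e2, hc]
    have e3 : C.det ^ ((1:ℝ)/2) * C.det ^ (-(1:ℝ)/2) = 1 := by
      rw [← Real.rpow_add hCdet]; norm_num
    have e4 : (2 * Real.pi) ^ (-(p : ℝ) / 2) * (2 * Real.pi) ^ ((p : ℝ) / 2) = 1 := by
      rw [← Real.rpow_add (by positivity)]; ring_nf; simp
    calc _ = (C.det ^ ((1:ℝ)/2) * C.det ^ (-(1:ℝ)/2)) *
        ((2 * Real.pi) ^ (-(p : ℝ) / 2) * (2 * Real.pi) ^ ((p : ℝ) / 2)) := by ring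
      _ = 1 := by rw [e3, e4, one_mul]
  have h4 : ENNReal.ofReal |W.det| * (ENNReal.ofReal |W.det⁻¹| • ∫⁻ x, F x) = ∫⁻ x, F x := by
    rw [smul_eq_mul, ← mul_assoc, ← ENNReal.ofReal_mul (abs_nonneg _), ← abs_mul,
      mul_inv_cancel₀ hWdet, abs_one, ENNReal.ofReal_one, one_mul]
  rw [← h4, h1, h2, ← ENNReal.ofReal_mul hc0, ← ENNReal.ofReal_mul (abs_nonneg _)]
  congr 1
  calc _ = (|W.det| * c * Real.sqrt (2 * Real.pi) ^ p) * ∏ i, (Real.sqrt (1 + 2 * θ * d i))⁻¹ := by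
        ring
    _ = _ := by rw [h3, one_mul]

/-- Lower tail of a sum of quadratic forms of i.i.d. Gaussian vectors. -/
lemma iidGaussian_quadForm_lower_tail {n p : ℕ} {C B W : Matrix (Fin p) (Fin p) ℝ}
    {d : Fin p → ℝ} (hC : C.PosDef) (hW : W * Wᵀ = C) (hd : Wᵀ * B * W = Matrix.diagonal d)
    {ν b r : ℝ} (hν : 0 < ν) (hb : 0 ≤ b) (hr : 0 ≤ r) (hdb : ∀ i, |d i| ≤ b)
    (hdν : ∑ i, d i ^ 2 ≤ ν ^ 2) :
    iidGaussian n p C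
        {X | ∑ k, X k ⬝ᵥ B *ᵥ X k ≤ n * (∑ i, d i - 2 * ν * r - 2 * b * r ^ 2)} ≤
      ENNReal.ofReal (Real.exp (-(n * r ^ 2))) := by
  have hden : 0 < ν + 2 * b * r := by positivity
  set θ : ℝ := r / (ν + 2 * b * r) with hθ
  have hθ0 : 0 ≤ θ := by positivity
  have hβeq : 1 - 2 * θ * b = ν / (ν + 2 * b * r) := by
    rw [hθ]; field_simp; ring
  have hβ : 2 * θ * b < 1 := by
    have : 0 < ν / (ν + 2 * b * r) := by positivity
    linarith
  have hβ' : 0 < 1 - 2 * θ * b := by linarith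
  have hw : ∀ i, |2 * θ * d i| ≤ 2 * θ * b := fun i => by
    rw [abs_mul, abs_of_nonneg (by positivity : (0:ℝ) ≤ 2 * θ)]
    exact mul_le_mul_of_nonneg_left (hdb i) (by positivity)
  have hpos : ∀ i, 0 < 1 + 2 * θ * d i := fun i => by linarith [(abs_le.1 (hw i)).1]
  set a : ℝ := n * (∑ i, d i - 2 * ν * r - 2 * b * r ^ 2) with ha
  set K : ℝ := -(θ * ∑ i, d i) + θ ^ 2 * ν ^ 2 / (1 - 2 * θ * b) with hK
  have hprod : ∏ i, (Real.sqrt (1 + 2 * θ * d i))⁻¹ ≤ Real.exp K := by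
    calc ∏ i, (Real.sqrt (1 + 2 * θ * d i))⁻¹
        ≤ ∏ i, Real.exp (-(2 * θ * d i / 2) + (2 * θ * d i) ^ 2 / (4 * (1 - 2 * θ * b))) :=
          Finset.prod_le_prod (fun i _ => by positivity)
            fun i _ => inv_sqrt_one_add_le_exp (hw i) hβ
      _ = Real.exp (-(θ * ∑ i, d i) + θ ^ 2 * (∑ i, d i ^ 2) / (1 - 2 * θ * b)) := by
          rw [← Real.exp_sum, Finset.sum_add_distrib, Finset.mul_sum, Finset.mul_sum,
            Finset.sum_div, Finset.sum_neg_distrib]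
          congr 3
          · exact Finset.sum_congr rfl fun i _ => by ring
          · funext i
            field_simp
            ring
      _ ≤ Real.exp K := by
          rw [hK]
          gcongr
  have hmgf := lintegral_gaussianPDF_mul_exp hC hW hd hpos
  set g : (Fin p → ℝ) → ℝ := fun x => (gaussianPDF C x).toReal *
    Real.exp (-θ * (x ⬝ᵥ B *ᵥ x)) with hg
  have hg0 : ∀ x, 0 ≤ g x := fun x => by positivity
  have hgof : ∀ x, gaussianPDF C x * ENNReal.ofReal (Real.exp (-θ * (x ⬝ᵥ B *ᵥ x))) =
      ENNReal.ofReal (g x) := fun x => by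
    rw [hg, ENNReal.ofReal_mul ENNReal.toReal_nonneg, ENNReal.ofReal_toReal]
    exact ENNReal.ofReal_ne_top
  have hpdfm : Measurable (gaussianPDF C) := by
    unfold gaussianPDF
    simp only [dotProduct, Matrix.mulVec]
    fun_prop
  have hgm : Measurable g := by
    simp only [hg, dotProduct, Matrix.mulVec]
    fun_prop
  simp only [hgof] at hmgf
  have hgint : Integrable g := by
    rw [← lintegral_ofReal_ne_top_iff_integrable hgm.aestronglyMeasurable
      (Filter.Eventually.of_forall hg0), hmgf]
    exact ENNReal.ofReal_ne_top
  have hgle : ∫ x, g x ≤ Real.exp K := by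
    rw [integral_eq_lintegral_of_nonneg_ae (Filter.Eventually.of_forall hg0)
      hgm.aestronglyMeasurable, hmgf, ENNReal.toReal_ofReal (by positivity)]
    exact hprod
  have hexp : θ * a + n * K = -(n * r ^ 2) := by
    rw [ha, hK, hβeq, hθ]
    field_simp
    ring
  calc iidGaussian n p C {X | ∑ k, X k ⬝ᵥ B *ᵥ X k ≤ a}
      = ∫⁻ X in {X : Fin n → Fin p → ℝ | ∑ k, X k ⬝ᵥ B *ᵥ X k ≤ a}, ∏ k, gaussianPDF C (X k) :=
        withDensity_apply' _ _
    _ ≤ ∫⁻ X in {X : Fin n → Fin p → ℝ | ∑ k, X k ⬝ᵥ B *ᵥ X k ≤ a},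
          ENNReal.ofReal (Real.exp (θ * a)) * ENNReal.ofReal (∏ k, g (X k)) := by
        refine setLIntegral_mono (by fun_prop) fun X hX => ?_
        rw [ENNReal.ofReal_prod_of_nonneg fun k _ => hg0 _]
        simp only [← hgof]
        rw [Finset.prod_mul_distrib, ← ENNReal.ofReal_prod_of_nonneg fun k _ => Real.exp_nonneg _,
          ← Real.exp_sum, ← Finset.mul_sum, mul_left_comm, ← ENNReal.ofReal_mul (Real.exp_nonneg _),
          ← Real.exp_add]
        refine le_mul_of_one_le_right zero_le ?_
        rw [ENNReal.one_le_ofReal, Real.one_le_exp_iff]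
        have : θ * ∑ k, X k ⬝ᵥ B *ᵥ X k ≤ θ * a := mul_le_mul_of_nonneg_left hX hθ0
        linarith
    _ ≤ ∫⁻ X : Fin n → Fin p → ℝ,
          ENNReal.ofReal (Real.exp (θ * a)) * ENNReal.ofReal (∏ k, g (X k)) :=
        setLIntegral_le_lintegral _ _
    _ = ENNReal.ofReal (Real.exp (θ * a) * ∏ _k : Fin n, ∫ x, g x) := by
        rw [lintegral_const_mul' _ _ ENNReal.ofReal_ne_top,
          lintegral_ofReal_prod (fun _ => hg0) (fun _ => hgint),
          ENNReal.ofReal_mul (Real.exp_nonneg _)]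
    _ ≤ ENNReal.ofReal (Real.exp (-(n * r ^ 2))) := by
        refine ENNReal.ofReal_le_ofReal ?_
        rw [Finset.prod_const, Finset.card_univ, Fintype.card_fin]
        calc Real.exp (θ * a) * (∫ x, g x) ^ n ≤ Real.exp (θ * a) * Real.exp K ^ n := by
              gcongr
          _ = Real.exp (-(n * r ^ 2)) := by
              rw [← Real.exp_nat_mul, ← Real.exp_add, hexp]

lemma trace_mul_mul_sq_eq_sum {p : ℕ} {C A W : Matrix (Fin p) (Fin p) ℝ} (hW : W * Wᵀ = C)
    (hA : A.IsHermitian) :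
    Matrix.trace (A * C * (A * C)) = ∑ i, ∑ k, (Wᵀ * A * W) i k ^ 2 := by
  have hsymm : (Wᵀ * A * W)ᵀ = Wᵀ * A * W := by
    rw [Matrix.transpose_mul, Matrix.transpose_mul, Matrix.transpose_transpose,
      ← Matrix.conjTranspose_eq_transpose_of_trivial A, hA.eq, Matrix.mul_assoc]
  have h1 : Matrix.trace (A * C * (A * C)) =
      Matrix.trace ((Wᵀ * A * W) * (Wᵀ * A * W)ᵀ) := by
    rw [hsymm, ← hW]
    calc Matrix.trace (A * (W * Wᵀ) * (A * (W * Wᵀ)))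
        = Matrix.trace ((A * W * Wᵀ * A * W) * Wᵀ) := by simp only [Matrix.mul_assoc]
      _ = _ := by rw [Matrix.trace_mul_comm]; simp only [Matrix.mul_assoc]
  rw [h1]
  generalize Wᵀ * A * W = G
  simp only [Matrix.trace, Matrix.diag, Matrix.mul_apply, Matrix.transpose_apply, sq]

/-- Intrinsic form of the lower tail bound for Gaussian quadratic forms. -/
lemma iidGaussian_quadForm_lower_tail_trace {n p : ℕ} {C B : Matrix (Fin p) (Fin p) ℝ}
    (hC : C.PosDef) (hB : B.IsHermitian) {R β ν r : ℝ} (hR0 : 0 ≤ R) (hβ0 : 0 ≤ β)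
    (hR : ∀ x : Fin p → ℝ, |x ⬝ᵥ C *ᵥ x| ≤ R * (x ⬝ᵥ x))
    (hβ : ∀ x : Fin p → ℝ, |x ⬝ᵥ B *ᵥ x| ≤ β * (x ⬝ᵥ x))
    (hν : 0 < ν) (hr : 0 ≤ r) (hV : Matrix.trace (B * C * (B * C)) ≤ ν ^ 2) :
    iidGaussian n p C
        {X | ∑ k, X k ⬝ᵥ B *ᵥ X k ≤
          n * (Matrix.trace (B * C) - 2 * ν * r - 2 * (β * R) * r ^ 2)} ≤
      ENNReal.ofReal (Real.exp (-(n * r ^ 2))) := by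
  obtain ⟨W, d, hW, hd⟩ := exists_congruence_diagonal hC hB
  have htr : Matrix.trace (B * C) = ∑ i, d i := by
    rw [← Matrix.trace_diagonal, ← hd, ← hW, ← Matrix.mul_assoc, Matrix.trace_mul_comm,
      ← Matrix.mul_assoc]
  have htr2 : Matrix.trace (B * C * (B * C)) = ∑ i, d i ^ 2 := by
    rw [trace_mul_mul_sq_eq_sum hW hB, hd]
    refine Finset.sum_congr rfl fun i _ => ?_
    rw [Finset.sum_eq_single i]
    · simp
    · intro k _ hk; simp [Matrix.diagonal_apply_ne _ hk.symm]
    · simp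
  have hdb : ∀ i, |d i| ≤ β * R := by
    intro i
    set w : Fin p → ℝ := W.col i with hw
    have h1 : d i = w ⬝ᵥ B *ᵥ w := by
      have : d i = (Wᵀ * B * W) i i := by rw [hd]; simp
      rw [this, Matrix.mul_assoc, Matrix.mul_apply]
      rfl
    have h2 : (w ⬝ᵥ w) ^ 2 ≤ R * (w ⬝ᵥ w) := by
      calc (w ⬝ᵥ w) ^ 2 = ((Wᵀ *ᵥ w) i) ^ 2 := rfl
        _ ≤ ∑ k, ((Wᵀ *ᵥ w) k) ^ 2 :=
            Finset.single_le_sum (f := fun k => ((Wᵀ *ᵥ w) k) ^ 2) (fun k _ => sq_nonneg _)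
              (Finset.mem_univ i)
        _ = w ⬝ᵥ C *ᵥ w := by
            rw [← hW, ← Matrix.mulVec_mulVec, Matrix.dotProduct_mulVec, ← Matrix.mulVec_transpose]
            simp only [dotProduct, sq]
        _ ≤ R * (w ⬝ᵥ w) := (le_abs_self _).trans (hR w)
    have h3 : w ⬝ᵥ w ≤ R := by
      rcases (show 0 ≤ w ⬝ᵥ w from Finset.sum_nonneg fun k _ => mul_self_nonneg _).eq_or_lt
        with h | h
      · rw [← h]; exact hR0
      · nlinarith
    rw [h1]
    exact (hβ w).trans (mul_le_mul_of_nonneg_left h3 hβ0)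
  rw [htr]
  exact iidGaussian_quadForm_lower_tail hC hW hd hν (by positivity) hr hdb (htr2 ▸ hV)

lemma trace_mul_mul_sq_le {p : ℕ} {C A : Matrix (Fin p) (Fin p) ℝ} (hC : C.PosDef)
    (hA : A.IsHermitian) {R : ℝ} (hR : ∀ x : Fin p → ℝ, |x ⬝ᵥ C *ᵥ x| ≤ R * (x ⬝ᵥ x)) :
    Matrix.trace (A * C * (A * C)) ≤ R * Matrix.trace (A * A * C) := by
  obtain ⟨W, -, hW, -⟩ := exists_congruence_diagonal hC hA
  have hAT : Aᵀ = A := by rw [← Matrix.conjTranspose_eq_transpose_of_trivial A, hA.eq]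
  have h1 : Matrix.trace (A * A * C) = ∑ k, (A * W).col k ⬝ᵥ (A * W).col k := by
    have : Matrix.trace (A * A * C) = Matrix.trace ((A * W)ᵀ * (A * W)) := by
      rw [← hW, Matrix.transpose_mul, hAT, ← Matrix.mul_assoc, Matrix.trace_mul_comm]
      simp only [Matrix.mul_assoc]
    rw [this]
    rfl
  rw [trace_mul_mul_sq_eq_sum hW hA, Finset.sum_comm, h1, Finset.mul_sum]
  refine Finset.sum_le_sum fun k _ => ?_
  refine le_trans (le_of_eq ?_) ((le_abs_self _).trans (hR _))
  rw [← hW, ← Matrix.mulVec_mulVec, Matrix.dotProduct_mulVec, ← Matrix.mulVec_transpose,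
    Matrix.mul_assoc]
  simp only [dotProduct, sq]
  rfl

lemma trace_sum_mul_mul_sq_le {p : ℕ} {ι : Type*} {C : Matrix (Fin p) (Fin p) ℝ} (hC : C.PosDef)
    (T : Finset ι) {A : ι → Matrix (Fin p) (Fin p) ℝ} (hA : ∀ j, (A j).IsHermitian)
    {ε : ι → ℝ} (hε : ∀ j, |ε j| ≤ 1) :
    Matrix.trace ((∑ j ∈ T, ε j • A j) * C * ((∑ j ∈ T, ε j • A j) * C)) ≤
      T.card * ∑ j ∈ T, Matrix.trace (A j * C * (A j * C)) := by
  have hB : (∑ j ∈ T, ε j • A j).IsHermitian := by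
    rw [Matrix.IsHermitian, Matrix.conjTranspose_sum]
    exact Finset.sum_congr rfl fun j _ => by rw [Matrix.conjTranspose_smul, (hA j).eq]; simp
  obtain ⟨W, -, hW, -⟩ := exists_congruence_diagonal hC hB
  rw [trace_mul_mul_sq_eq_sum hW hB]
  simp only [trace_mul_mul_sq_eq_sum hW (hA _)]
  calc ∑ i, ∑ k, (Wᵀ * (∑ j ∈ T, ε j • A j) * W) i k ^ 2
      ≤ ∑ i, ∑ k, (T.card * ∑ j ∈ T, (Wᵀ * A j * W) i k ^ 2) := by
        refine Finset.sum_le_sum fun i _ => Finset.sum_le_sum fun k _ => ?_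
        have h1 : (Wᵀ * (∑ j ∈ T, ε j • A j) * W) i k = ∑ j ∈ T, ε j * (Wᵀ * A j * W) i k := by
          simp [Matrix.mul_sum, Matrix.sum_mul, Matrix.sum_apply]
        rw [h1]
        refine sq_sum_le_card_mul_sum_sq.trans ?_
        refine mul_le_mul_of_nonneg_left (Finset.sum_le_sum fun j _ => ?_) (Nat.cast_nonneg _)
        rw [mul_pow]
        refine mul_le_of_le_one_left (sq_nonneg _) ?_
        rw [← sq_abs]
        exact pow_le_one₀ (abs_nonneg _) (hε j)
    _ = _ := by
        simp only [← Finset.mul_sum]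
        congr 1
        rw [Finset.sum_comm]
        conv_rhs => rw [Finset.sum_comm]
        rw [Finset.sum_comm]
        exact Finset.sum_congr rfl fun i _ => Finset.sum_comm

lemma abs_quadForm_le_of_rowSum_le {p : ℕ} {M : Matrix (Fin p) (Fin p) ℝ} (hM : M.IsHermitian)
    {R : ℝ} (hR : ∀ i, ∑ k, |M i k| ≤ R) (x : Fin p → ℝ) :
    |x ⬝ᵥ M *ᵥ x| ≤ R * (x ⬝ᵥ x) := by
  have hsymm : ∀ i k, M i k = M k i := fun i k => by simpa using (hM.apply i k).symm
  have h1 : |x ⬝ᵥ M *ᵥ x| ≤ ∑ i, ∑ k, |M i k| * ((x i ^ 2 + x k ^ 2) / 2) := by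
    simp only [dotProduct, Matrix.mulVec, Finset.mul_sum]
    refine (Finset.abs_sum_le_sum_abs _ _).trans (Finset.sum_le_sum fun i _ => ?_)
    refine (Finset.abs_sum_le_sum_abs _ _).trans (Finset.sum_le_sum fun k _ => ?_)
    have h : |x i * (M i k * x k)| = |M i k| * (|x i| * |x k|) := by
      rw [abs_mul, abs_mul]; ring
    rw [h]
    refine mul_le_mul_of_nonneg_left ?_ (abs_nonneg _)
    nlinarith [sq_nonneg (|x i| - |x k|), sq_abs (x i), sq_abs (x k)]
  have h2 : ∑ i, ∑ k, |M i k| * ((x i ^ 2 + x k ^ 2) / 2) = ∑ i, (∑ k, |M i k|) * x i ^ 2 := by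
    have h3 : ∑ i, ∑ k, |M i k| * x k ^ 2 = ∑ i, ∑ k, |M i k| * x i ^ 2 := by
      rw [Finset.sum_comm]
      exact Finset.sum_congr rfl fun i _ => Finset.sum_congr rfl fun k _ => by rw [hsymm]
    have h4 : ∑ i, ∑ k, |M i k| * ((x i ^ 2 + x k ^ 2) / 2) =
        (∑ i, ∑ k, |M i k| * x i ^ 2 + ∑ i, ∑ k, |M i k| * x k ^ 2) / 2 := by
      simp only [← Finset.sum_add_distrib, Finset.sum_div]
      exact Finset.sum_congr rfl fun i _ => Finset.sum_congr rfl fun k _ => by ring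
    rw [h4, h3]
    simp only [Finset.sum_mul]
    ring
  rw [h2] at h1
  refine h1.trans ?_
  rw [dotProduct, Finset.mul_sum]
  refine Finset.sum_le_sum fun i _ => ?_
  rw [← sq]
  exact mul_le_mul_of_nonneg_right (hR i) (sq_nonneg _)

lemma sum_fin_ite_intCast_eq_le_one {p : ℕ} (z : ℤ) :
    ∑ k : Fin p, (if (k : ℤ) = z then (1 : ℝ) else 0) ≤ 1 := by
  rw [Finset.sum_boole]
  have : (Finset.univ.filter fun k : Fin p => (k : ℤ) = z).card ≤ 1 := by
    rw [Finset.card_le_one]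
    intro a ha b hb
    simp only [Finset.mem_filter, Finset.mem_univ, true_and] at ha hb
    exact Fin.ext (by omega)
  exact_mod_cast this

lemma sum_fin_ite_natAbs_sub_eq_le_two {p : ℕ} (i : Fin p) (j : ℕ) :
    ∑ k : Fin p, (if ((i : ℤ) - (k : ℤ)).natAbs = j then (1 : ℝ) else 0) ≤ 2 := by
  have h : ∀ k : Fin p, (if ((i : ℤ) - (k : ℤ)).natAbs = j then (1 : ℝ) else 0) ≤
      (if (k : ℤ) = i + j then (1 : ℝ) else 0) + (if (k : ℤ) = i - j then (1 : ℝ) else 0) := by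
    intro k
    split_ifs <;> first | omega | norm_num
  refine (Finset.sum_le_sum fun k _ => h k).trans ?_
  rw [Finset.sum_add_distrib]
  linarith [sum_fin_ite_intCast_eq_le_one (p := p) ((i : ℤ) + j),
    sum_fin_ite_intCast_eq_le_one (p := p) ((i : ℤ) - j)]

lemma sum_fin_ite_eq_add {p j : ℕ} (hj : j ≤ p) :
    ∑ i : Fin p, ∑ k : Fin p, (if (k : ℕ) = i + j then (1 : ℝ) else 0) = (p : ℝ) - j := by
  have h1 : ∀ i : Fin p, ∑ k : Fin p, (if (k : ℕ) = i + j then (1 : ℝ) else 0) =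
      if (i : ℕ) + j < p then 1 else 0 := by
    intro i
    rw [Fin.sum_univ_eq_sum_range (fun k => if k = (i : ℕ) + j then (1 : ℝ) else 0) p]
    simp
  simp only [h1]
  rw [Fin.sum_univ_eq_sum_range (fun i => if i + j < p then (1 : ℝ) else 0) p, Finset.sum_boole]
  have h2 : (Finset.range p).filter (fun i => i + j < p) = Finset.range (p - j) := by
    ext i; simp only [Finset.mem_filter, Finset.mem_range]; omega
  rw [h2, Finset.card_range, Nat.cast_sub hj]

lemma sum_sum_fin_ite_natAbs_sub_eq {p j : ℕ} (hj : 1 ≤ j) (hjp : j ≤ p) :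
    ∑ i : Fin p, ∑ k : Fin p, (if ((i : ℤ) - (k : ℤ)).natAbs = j then (1 : ℝ) else 0) =
      2 * ((p : ℝ) - j) := by
  have h : ∀ i k : Fin p, (if ((i : ℤ) - (k : ℤ)).natAbs = j then (1 : ℝ) else 0) =
      (if (k : ℕ) = i + j then (1 : ℝ) else 0) + (if (i : ℕ) = k + j then (1 : ℝ) else 0) := by
    intro i k
    split_ifs <;> first | omega | norm_num
  simp only [h, Finset.sum_add_distrib]
  rw [Finset.sum_comm (f := fun (i k : Fin p) => if (i : ℕ) = k + j then (1 : ℝ) else 0),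
    sum_fin_ite_eq_add hjp]
  ring

lemma lagMatrix_apply {p j : ℕ} (i k : Fin p) :
    lagMatrix p j i k =
      1 / (2 * ((p : ℝ) - j)) * (if ((i : ℤ) - (k : ℤ)).natAbs = j then (1 : ℝ) else 0) := by
  simp [lagMatrix]

lemma isHermitian_lagMatrix (p j : ℕ) : (lagMatrix p j).IsHermitian := by
  ext i k
  simp only [Matrix.conjTranspose_apply, lagMatrix_apply, star_trivial]
  rw [← Int.natAbs_neg, neg_sub]

lemma sum_abs_lagMatrix_le {p j : ℕ} (hjp : j < p) (i : Fin p) :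
    ∑ k, |lagMatrix p j i k| ≤ 1 / ((p : ℝ) - j) := by
  have hpos : (0 : ℝ) < (p : ℝ) - j := sub_pos.2 (by exact_mod_cast hjp)
  have h : ∀ k, |lagMatrix p j i k| =
      1 / (2 * ((p : ℝ) - j)) * (if ((i : ℤ) - (k : ℤ)).natAbs = j then (1 : ℝ) else 0) := by
    intro k
    rw [lagMatrix_apply, abs_of_nonneg]
    positivity
  simp only [h, ← Finset.mul_sum]
  calc _ ≤ 1 / (2 * ((p : ℝ) - j)) * 2 :=
        mul_le_mul_of_nonneg_left (sum_fin_ite_natAbs_sub_eq_le_two i j) (by positivity)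
    _ = _ := by field_simp

lemma trace_lagMatrix_mul {p j : ℕ} (hj : 1 ≤ j) (hjp : j < p) {C : Matrix (Fin p) (Fin p) ℝ}
    {v : ℕ → ℝ} (hCv : ∀ i k : Fin p, C i k = v ((i : ℤ) - (k : ℤ)).natAbs) :
    Matrix.trace (lagMatrix p j * C) = v j := by
  have hpos : (0 : ℝ) < (p : ℝ) - j := sub_pos.2 (by exact_mod_cast hjp)
  have h : ∀ i k : Fin p, lagMatrix p j i k * C k i =
      v j / (2 * ((p : ℝ) - j)) * (if ((i : ℤ) - (k : ℤ)).natAbs = j then (1 : ℝ) else 0) := by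
    intro i k
    rw [lagMatrix_apply, hCv]
    split_ifs with hik
    · rw [← Int.natAbs_neg, neg_sub, hik]; ring
    · simp
  simp only [Matrix.trace, Matrix.diag, Matrix.mul_apply, h, ← Finset.mul_sum]
  rw [sum_sum_fin_ite_natAbs_sub_eq hj hjp.le]
  field_simp

lemma trace_lagMatrix_mul_lagMatrix_mul_le {p j : ℕ} (hj : 1 ≤ j) (hjp : j < p)
    {C : Matrix (Fin p) (Fin p) ℝ} {v : ℕ → ℝ} (hv0 : v 0 = 1)
    (hCv : ∀ i k : Fin p, C i k = v ((i : ℤ) - (k : ℤ)).natAbs) :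
    Matrix.trace (lagMatrix p j * lagMatrix p j * C) ≤ (1 + |v (2 * j)|) / (2 * ((p : ℝ) - j)) := by
  have hpos : (0 : ℝ) < (p : ℝ) - j := sub_pos.2 (by exact_mod_cast hjp)
  set c : ℝ := 1 / (2 * ((p : ℝ) - j)) with hc
  have hc0 : 0 < c := by positivity
  have h1 : ∀ i k : Fin p, ((i : ℤ) - (k : ℤ)).natAbs = j →
      (lagMatrix p j * C) k i ≤ c * (1 + |v (2 * j)|) := by
    intro i k hik
    have h2 : ∀ l : Fin p, lagMatrix p j k l * C l i ≤
        c * ((if (l : ℤ) = i then (1 : ℝ) else 0) +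
          |v (2 * j)| * (if (l : ℤ) = 2 * k - i then (1 : ℝ) else 0)) := by
      intro l
      rw [lagMatrix_apply, mul_assoc]
      refine mul_le_mul_of_nonneg_left ?_ hc0.le
      by_cases hkl : ((k : ℤ) - (l : ℤ)).natAbs = j
      · rw [if_pos hkl, one_mul, hCv]
        by_cases hli : (l : ℤ) = i
        · rw [if_pos hli, hli, sub_self, Int.natAbs_zero, hv0]
          have : (0 : ℝ) ≤ |v (2 * j)| * (if (i : ℤ) = 2 * k - i then (1 : ℝ) else 0) := by
            positivity
          linarith
        · have hl : (l : ℤ) = 2 * k - i := by omega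
          have hli2 : ((l : ℤ) - (i : ℤ)).natAbs = 2 * j := by omega
          rw [if_neg hli, if_pos hl, hli2, zero_add, mul_one]
          exact le_abs_self _
      · rw [if_neg hkl, zero_mul]
        positivity
    rw [Matrix.mul_apply]
    refine (Finset.sum_le_sum fun l _ => h2 l).trans ?_
    rw [← Finset.mul_sum, Finset.sum_add_distrib, ← Finset.mul_sum]
    refine mul_le_mul_of_nonneg_left ?_ hc0.le
    have h3 := sum_fin_ite_intCast_eq_le_one (p := p) (i : ℤ)
    have h4 := mul_le_mul_of_nonneg_left (sum_fin_ite_intCast_eq_le_one (p := p) (2 * (k : ℤ) - i))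
      (abs_nonneg (v (2 * j)))
    linarith
  rw [Matrix.mul_assoc]
  calc Matrix.trace (lagMatrix p j * (lagMatrix p j * C))
      = ∑ i, ∑ k, lagMatrix p j i k * (lagMatrix p j * C) k i := by
        simp only [Matrix.trace, Matrix.diag, Matrix.mul_apply (M := lagMatrix p j)
          (N := lagMatrix p j * C)]
    _ ≤ ∑ i : Fin p, ∑ k : Fin p, c * (c * (1 + |v (2 * j)|)) *
          (if ((i : ℤ) - (k : ℤ)).natAbs = j then (1 : ℝ) else 0) := by
        refine Finset.sum_le_sum fun i _ => Finset.sum_le_sum fun k _ => ?_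
        rw [lagMatrix_apply]
        split_ifs with hik
        · rw [mul_one, mul_one]
          exact mul_le_mul_of_nonneg_left (h1 i k hik) hc0.le
        · simp
    _ = _ := by
        simp only [← Finset.mul_sum]
        rw [sum_sum_fin_ite_natAbs_sub_eq hj hjp.le, hc]
        field_simp

lemma trace_lagMatrix_mul_sampleCov {n p j : ℕ} (X : Fin n → Fin p → ℝ) :
    Matrix.trace (lagMatrix p j * sampleCov X) =
      (n : ℝ)⁻¹ * ∑ k, X k ⬝ᵥ lagMatrix p j *ᵥ X k := by
  rw [sampleCov, Matrix.mul_smul, Matrix.trace_smul, smul_eq_mul, Matrix.mul_sum,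
    Matrix.trace_sum]
  congr 1
  refine Finset.sum_congr rfl fun k _ => ?_
  simp only [Matrix.trace, Matrix.diag, Matrix.mul_apply, dotProduct, Matrix.mulVec,
    Matrix.of_apply, Finset.mul_sum]
  exact Finset.sum_congr rfl fun i _ => Finset.sum_congr rfl fun l _ => by ring

lemma one_apply_eq_toeplitz {p : ℕ} (i k : Fin p) :
    (1 : Matrix (Fin p) (Fin p) ℝ) i k =
      (fun l : ℕ => if l = 0 then (1 : ℝ) else 0) ((i : ℤ) - (k : ℤ)).natAbs := by
  by_cases h : i = k
  · subst h; simp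
  · have : ((i : ℤ) - (k : ℤ)).natAbs ≠ 0 := by
      intro h'; exact h (Fin.ext (by omega))
    simp [h, this]

lemma trace_lagMatrix_mul_sampleCov_sub_one {n p j : ℕ} (hj : 1 ≤ j) (hjp : j < p)
    (X : Fin n → Fin p → ℝ) :
    Matrix.trace (lagMatrix p j * (sampleCov X - 1)) =
      (n : ℝ)⁻¹ * ∑ k, X k ⬝ᵥ lagMatrix p j *ᵥ X k := by
  rw [Matrix.mul_sub, Matrix.trace_sub, trace_lagMatrix_mul_sampleCov,
    trace_lagMatrix_mul (v := fun l => if l = 0 then (1 : ℝ) else 0) hj hjp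
      one_apply_eq_toeplitz]
  simp [Nat.one_le_iff_ne_zero.1 hj]

/-- Lower tail of signed sums of empirical autocovariances under a Toeplitz covariance. -/
lemma iidGaussian_signed_lag_sum_tail {n p S : ℕ} (hn : 0 < n) (hSp : S < p)
    {C : Matrix (Fin p) (Fin p) ℝ} (hC : C.PosDef) {v : ℕ → ℝ} (hv0 : v 0 = 1)
    (hCv : ∀ i k : Fin p, C i k = v ((i : ℤ) - (k : ℤ)).natAbs)
    {T : Finset ℕ} (hT : T ⊆ Finset.Icc 1 S) (hTne : T.Nonempty) {ε : ℕ → ℝ}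
    (hε : ∀ j, |ε j| ≤ 1) {R κ ρ : ℝ} (hR0 : 0 ≤ R) (hR : ∀ i, ∑ k, |C i k| ≤ R) (hκ : 0 < κ)
    (hκR : R * (T.card + ∑ j ∈ T, |v (2 * j)|) ≤ 2 * T.card * κ ^ 2) (hρ : 0 ≤ ρ) :
    iidGaussian n p C {X | ∑ j ∈ T, ε j * Matrix.trace (lagMatrix p j * (sampleCov X - 1)) ≤
        ∑ j ∈ T, ε j * v j - 2 * T.card * κ * ρ - 2 * T.card * R * ρ ^ 2} ≤
      ENNReal.ofReal (Real.exp (-(n * ((p : ℝ) - S) * ρ ^ 2))) := by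
  set q : ℝ := (p : ℝ) - S with hq
  have hq0 : 0 < q := sub_pos.2 (by exact_mod_cast hSp)
  have hn0 : (0 : ℝ) < n := by exact_mod_cast hn
  have hs0 : (0 : ℝ) < T.card := by exact_mod_cast hTne.card_pos
  have hj : ∀ j ∈ T, 1 ≤ j ∧ j < p ∧ q ≤ (p : ℝ) - j := by
    intro j hjT
    have h := Finset.mem_Icc.1 (hT hjT)
    refine ⟨h.1, by omega, ?_⟩
    have : (j : ℝ) ≤ S := by exact_mod_cast h.2
    rw [hq]; linarith
  set B : Matrix (Fin p) (Fin p) ℝ := ∑ j ∈ T, ε j • lagMatrix p j with hBdef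
  have hB : B.IsHermitian := by
    rw [Matrix.IsHermitian, hBdef, Matrix.conjTranspose_sum]
    exact Finset.sum_congr rfl fun j _ => by
      rw [Matrix.conjTranspose_smul, (isHermitian_lagMatrix p j).eq]; simp
  have hRquad := abs_quadForm_le_of_rowSum_le hC.1 hR
  have hBrow : ∀ i, ∑ k, |B i k| ≤ T.card / q := by
    intro i
    calc ∑ k, |B i k| ≤ ∑ k, ∑ j ∈ T, |lagMatrix p j i k| := by
          refine Finset.sum_le_sum fun k _ => ?_
          rw [hBdef, Matrix.sum_apply]
          refine (Finset.abs_sum_le_sum_abs _ _).trans (Finset.sum_le_sum fun j _ => ?_)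
          rw [Matrix.smul_apply, smul_eq_mul, abs_mul]
          exact mul_le_of_le_one_left (abs_nonneg _) (hε j)
      _ = ∑ j ∈ T, ∑ k, |lagMatrix p j i k| := Finset.sum_comm
      _ ≤ ∑ j ∈ T, 1 / q := by
          refine Finset.sum_le_sum fun j hjT => ?_
          obtain ⟨-, h2, h3⟩ := hj j hjT
          exact (sum_abs_lagMatrix_le h2 i).trans (one_div_le_one_div_of_le hq0 h3)
      _ = T.card / q := by rw [Finset.sum_const, nsmul_eq_mul]; ring
  have hBquad := abs_quadForm_le_of_rowSum_le hB hBrow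
  have hV : Matrix.trace (B * C * (B * C)) ≤ (T.card * κ / Real.sqrt q) ^ 2 := by
    calc Matrix.trace (B * C * (B * C))
        ≤ T.card * ∑ j ∈ T, Matrix.trace (lagMatrix p j * C * (lagMatrix p j * C)) :=
          trace_sum_mul_mul_sq_le hC T (fun j => isHermitian_lagMatrix p j) hε
      _ ≤ T.card * ∑ j ∈ T, R * ((1 + |v (2 * j)|) / (2 * q)) := by
          refine mul_le_mul_of_nonneg_left (Finset.sum_le_sum fun j hjT => ?_) hs0.le
          obtain ⟨h1, h2, h3⟩ := hj j hjT
          refine (trace_mul_mul_sq_le hC (isHermitian_lagMatrix p j) hRquad).trans ?_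
          refine mul_le_mul_of_nonneg_left ?_ hR0
          refine (trace_lagMatrix_mul_lagMatrix_mul_le h1 h2 hv0 hCv).trans ?_
          exact div_le_div_of_nonneg_left (by positivity) (by positivity) (by linarith)
      _ = T.card / (2 * q) * (R * (T.card + ∑ j ∈ T, |v (2 * j)|)) := by
          rw [← Finset.mul_sum, ← Finset.sum_div, Finset.sum_add_distrib]
          simp only [Finset.sum_const, nsmul_eq_mul, mul_one]
          ring
      _ ≤ T.card / (2 * q) * (2 * T.card * κ ^ 2) :=
          mul_le_mul_of_nonneg_left hκR (by positivity)
      _ = (T.card * κ / Real.sqrt q) ^ 2 := by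
          rw [div_pow, Real.sq_sqrt hq0.le]
          field_simp
  have hmain := iidGaussian_quadForm_lower_tail_trace (n := n) (r := ρ * Real.sqrt q) hC hB hR0
    (by positivity : (0 : ℝ) ≤ T.card / q) hRquad hBquad (by positivity) (by positivity) hV
  have hsq : Real.sqrt q ^ 2 = q := Real.sq_sqrt hq0.le
  have hexp : (n : ℝ) * (ρ * Real.sqrt q) ^ 2 = n * q * ρ ^ 2 := by
    rw [mul_pow, hsq]; ring
  rw [hexp] at hmain
  refine (measure_mono fun X hX => ?_).trans hmain
  simp only [Set.mem_ofPred_eq] at hX ⊢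
  have htr : Matrix.trace (B * C) = ∑ j ∈ T, ε j * v j := by
    rw [hBdef, Matrix.sum_mul, Matrix.trace_sum]
    refine Finset.sum_congr rfl fun j hjT => ?_
    obtain ⟨h1, h2, -⟩ := hj j hjT
    rw [Matrix.smul_mul, Matrix.trace_smul, trace_lagMatrix_mul h1 h2 hCv, smul_eq_mul]
  have hstat : ∑ k, X k ⬝ᵥ B *ᵥ X k =
      n * ∑ j ∈ T, ε j * Matrix.trace (lagMatrix p j * (sampleCov X - 1)) := by
    have h1 : ∀ k, X k ⬝ᵥ B *ᵥ X k = ∑ j ∈ T, ε j * (X k ⬝ᵥ lagMatrix p j *ᵥ X k) := by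
      intro k
      rw [hBdef, Matrix.sum_mulVec, dotProduct_sum]
      exact Finset.sum_congr rfl fun j _ => by
        rw [Matrix.smul_mulVec, dotProduct_smul, smul_eq_mul]
    simp only [h1]
    rw [Finset.sum_comm, Finset.mul_sum]
    refine Finset.sum_congr rfl fun j hjT => ?_
    obtain ⟨h1, h2, -⟩ := hj j hjT
    rw [trace_lagMatrix_mul_sampleCov_sub_one h1 h2, ← Finset.mul_sum]
    field_simp
  rw [hstat, htr]
  refine mul_le_mul_of_nonneg_left (hX.trans (le_of_eq ?_)) hn0.le
  have hsq0 : Real.sqrt q ≠ 0 := (Real.sqrt_pos.2 hq0).ne'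
  have e1 : 2 * (T.card * κ / Real.sqrt q) * (ρ * Real.sqrt q) = 2 * T.card * κ * ρ := by
    field_simp
  have e2 : 2 * (T.card / q * R) * (ρ * Real.sqrt q) ^ 2 = 2 * T.card * R * ρ ^ 2 := by
    rw [mul_pow, hsq]; field_simp
  rw [e1, e2]

lemma iidGaussian_one_abs_lag_tail {n p S j : ℕ} (hn : 0 < n) (hSp : S < p) (hj : 1 ≤ j)
    (hjS : j ≤ S) {ρ m : ℝ} (hρ : 0 ≤ ρ) (hm : 3 / 2 * ρ + 2 * ρ ^ 2 ≤ m) :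
    iidGaussian n p 1 {X | m ≤ |Matrix.trace (lagMatrix p j * (sampleCov X - 1))|} ≤
      ENNReal.ofReal (2 * Real.exp (-(n * ((p : ℝ) - S) * ρ ^ 2))) := by
  have hone : ∀ ε : ℝ, |ε| ≤ 1 → iidGaussian n p 1
      {X | ε * Matrix.trace (lagMatrix p j * (sampleCov X - 1)) ≤ -m} ≤
      ENNReal.ofReal (Real.exp (-(n * ((p : ℝ) - S) * ρ ^ 2))) := by
    intro ε hε
    have hj0 : j ≠ 0 := by omega
    have h := iidGaussian_signed_lag_sum_tail (n := n) (p := p) (S := S) (T := {j})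
      (ε := fun _ => ε) (R := 1) (κ := 3 / 4) (ρ := ρ) hn hSp Matrix.PosDef.one
      (v := fun l => if l = 0 then (1 : ℝ) else 0) (by simp) one_apply_eq_toeplitz
      (by simp [hj, hjS]) (by simp) (fun _ => hε) zero_le_one
      (fun i => by simp [Matrix.one_apply, apply_ite abs]) (by norm_num)
      (by simp [hj0]; norm_num) hρ
    refine (measure_mono fun X hX => ?_).trans h
    simp only [Set.mem_ofPred_eq, Finset.sum_singleton, Finset.card_singleton, hj0, if_false,
      Nat.cast_one] at hX ⊢
    linarith
  rw [two_mul, ENNReal.ofReal_add (Real.exp_nonneg _) (Real.exp_nonneg _)]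
  refine le_trans (measure_mono fun X hX => ?_) ((measure_union_le _ _).trans
    (add_le_add (hone 1 (by simp)) (hone (-1) (by simp))))
  simp only [Set.mem_ofPred_eq, Set.mem_union] at hX ⊢
  rcases le_abs.1 hX with h | h
  · right; linarith
  · left; linarith

/-- Positivity of a Toeplitz matrix tested along an arithmetic progression of step `j`. -/
lemma toeplitz_progression_nonneg {p : ℕ} {C : Matrix (Fin p) (Fin p) ℝ} (hC : C.PosDef)
    {v : ℕ → ℝ} (hCv : ∀ i k : Fin p, C i k = v ((i : ℤ) - (k : ℤ)).natAbs)
    {m j : ℕ} (h : ∀ a : Fin m, (a : ℕ) * j < p) (y : Fin m → ℝ) :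
    0 ≤ ∑ a : Fin m, ∑ b : Fin m, y a * y b * v (((a : ℤ) - (b : ℤ)).natAbs * j) := by
  have h1 := (hC.posSemidef.submatrix fun a : Fin m => (⟨a * j, h a⟩ : Fin p)
    ).dotProduct_mulVec_nonneg y
  refine h1.trans (le_of_eq ?_)
  simp only [dotProduct, Matrix.mulVec, Finset.mul_sum, Pi.star_apply, star_trivial,
    Matrix.submatrix_apply, hCv]
  refine Finset.sum_congr rfl fun a _ => Finset.sum_congr rfl fun b _ => ?_
  have : (((a : ℕ) * j : ℕ) : ℤ) - (((b : ℕ) * j : ℕ) : ℤ) = ((a : ℤ) - (b : ℤ)) * (j : ℤ) := by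
    push_cast; ring
  rw [this, Int.natAbs_mul, Int.natAbs_natCast]
  ring

lemma toeplitz_abs_le_one {p : ℕ} {C : Matrix (Fin p) (Fin p) ℝ} (hC : C.PosDef)
    {v : ℕ → ℝ} (hv0 : v 0 = 1) (hCv : ∀ i k : Fin p, C i k = v ((i : ℤ) - (k : ℤ)).natAbs)
    {j : ℕ} (hj : j < p) : |v j| ≤ 1 := by
  have h : ∀ a : Fin 2, (a : ℕ) * j < p := by
    intro a
    exact (Nat.mul_le_mul_right j (Nat.lt_succ_iff.1 a.2)).trans_lt (by omega)
  have h1 := toeplitz_progression_nonneg hC hCv h ![1, 1]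
  have h2 := toeplitz_progression_nonneg hC hCv h ![1, -1]
  simp [Fin.sum_univ_two, hv0] at h1 h2
  rw [abs_le]
  constructor <;> linarith

lemma toeplitz_abs_le_of_two_mul_eq_zero {p : ℕ} {C : Matrix (Fin p) (Fin p) ℝ} (hC : C.PosDef)
    {v : ℕ → ℝ} (hv0 : v 0 = 1) (hCv : ∀ i k : Fin p, C i k = v ((i : ℤ) - (k : ℤ)).natAbs)
    {j : ℕ} (hj : 2 * j < p) (hv : v (2 * j) = 0) : |v j| ≤ 17 / 24 := by
  have h : ∀ a : Fin 3, (a : ℕ) * j < p := by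
    intro a
    exact (Nat.mul_le_mul_right j (Nat.lt_succ_iff.1 a.2)).trans_lt hj
  have h1 := toeplitz_progression_nonneg hC hCv h ![1, 3 / 2, 1]
  have h2 := toeplitz_progression_nonneg hC hCv h ![1, -(3 / 2), 1]
  simp [Fin.sum_univ_three, hv0, hv] at h1 h2
  rw [abs_le]
  constructor <;> linarith

lemma toeplitz_abs_add_abs_two_mul_le {p : ℕ} {C : Matrix (Fin p) (Fin p) ℝ} (hC : C.PosDef)
    {v : ℕ → ℝ} (hv0 : v 0 = 1) (hCv : ∀ i k : Fin p, C i k = v ((i : ℤ) - (k : ℤ)).natAbs)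
    {j : ℕ} (hj : 4 * j < p) (hv3 : v (3 * j) = 0) (hv4 : v (4 * j) = 0) :
    |v j| + |v (2 * j)| ≤ 5 / 4 := by
  have h : ∀ a : Fin 5, (a : ℕ) * j < p := by
    intro a
    exact (Nat.mul_le_mul_right j (Nat.lt_succ_iff.1 a.2)).trans_lt hj
  have h1 := toeplitz_progression_nonneg hC hCv h ![1, 2, 0, -2, -1]
  have h2 := toeplitz_progression_nonneg hC hCv h ![1, -2, 0, 2, -1]
  have h3 := toeplitz_progression_nonneg hC hCv h ![1, 1 / 2, 1, 0, 0]
  have h4 := toeplitz_progression_nonneg hC hCv h ![1, -(1 / 2), 1, 0, 0]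
  simp [Fin.sum_univ_five, hv0, hv3, hv4] at h1 h2 h3 h4
  rcases abs_cases (v j) with ⟨h5, _⟩ | ⟨h5, _⟩ <;>
    rcases abs_cases (v (2 * j)) with ⟨h6, _⟩ | ⟨h6, _⟩ <;> rw [h5, h6] <;> linarith

/-- Numerical comparison between the signal and the variance proxy of a sparse Toeplitz
covariance. -/
lemma exists_deviation_factor {p s S : ℕ} (hs : 2 ≤ s) (hSp : 2 * S < p)
    {C : Matrix (Fin p) (Fin p) ℝ} (hC : C.PosDef) {v : ℕ → ℝ} (hv0 : v 0 = 1)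
    (hCv : ∀ i k : Fin p, C i k = v ((i : ℤ) - (k : ℤ)).natAbs)
    {T : Finset ℕ} (hT : T ⊆ Finset.Icc 1 S) (hTs : T.card = s)
    (hvT : ∀ j, 1 ≤ j → j ≤ p - 1 → j ∉ T → v j = 0) :
    ∃ κ : ℝ, 1 ≤ κ ∧
      (1 + 2 * ∑ j ∈ T, |v j|) * (s + ∑ j ∈ T, |v (2 * j)|) ≤ 2 * s * κ ^ 2 ∧
      κ + (1 + 2 * ∑ j ∈ T, |v j|) * (∑ j ∈ T, |v j|) / (2 * s * (s + 1)) ≤ s := by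
  set M := ∑ j ∈ T, |v j| with hM
  set Q := ∑ j ∈ T, |v (2 * j)| with hQ
  have hs' : (2 : ℝ) ≤ s := by exact_mod_cast hs
  have hmem : ∀ j ∈ T, 1 ≤ j ∧ j ≤ S := fun j hj => Finset.mem_Icc.1 (hT hj)
  have hle1 : ∀ j ∈ T, |v j| ≤ 1 := fun j hj =>
    toeplitz_abs_le_one hC hv0 hCv (by have := hmem j hj; omega)
  have hle2 : ∀ j ∈ T, |v (2 * j)| ≤ 1 := fun j hj =>
    toeplitz_abs_le_one hC hv0 hCv (by have := hmem j hj; omega)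
  have hzero : ∀ j ∈ T, 2 * j ∉ T → v (2 * j) = 0 := fun j hj h =>
    hvT _ (by have := hmem j hj; omega) (by have := hmem j hj; omega) h
  have hhalf : ∀ j ∈ T, 2 * j ∉ T → |v j| ≤ 17 / 24 := fun j hj h =>
    toeplitz_abs_le_of_two_mul_eq_zero hC hv0 hCv (by have := hmem j hj; omega) (hzero j hj h)
  have hM0 : 0 ≤ M := Finset.sum_nonneg fun _ _ => abs_nonneg _
  have hQ0 : 0 ≤ Q := Finset.sum_nonneg fun _ _ => abs_nonneg _
  have hfinish : ∀ {κ M₁ Q₁ : ℝ}, 1 ≤ κ → M ≤ M₁ → Q ≤ Q₁ →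
      (1 + 2 * M₁) * (s + Q₁) ≤ 2 * s * κ ^ 2 →
      (1 + 2 * M₁) * M₁ ≤ (s - κ) * (2 * s * (s + 1)) →
      ∃ κ : ℝ, 1 ≤ κ ∧ (1 + 2 * M) * (s + Q) ≤ 2 * s * κ ^ 2 ∧
        κ + (1 + 2 * M) * M / (2 * s * (s + 1)) ≤ s := by
    intro κ M₁ Q₁ h1 h2 h3 h4 h5
    have hM₁ : 0 ≤ M₁ := hM0.trans h2
    refine ⟨κ, h1, le_trans (by gcongr) h4, ?_⟩
    have h6 : (1 + 2 * M) * M ≤ (s - κ) * (2 * s * (s + 1)) := le_trans (by gcongr) h5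
    have h7 := (div_le_iff₀ (by positivity)).2 h6
    linarith
  rcases Nat.lt_or_ge s 4 with h4 | h4
  · have hTne : T.Nonempty := Finset.card_pos.1 (by omega)
    obtain ⟨k, hkT, hkmax⟩ : ∃ k ∈ T, ∀ j ∈ T, j ≤ k :=
      ⟨T.max' hTne, T.max'_mem hTne, fun j hj => T.le_max' j hj⟩
    have hk2 : 2 * k ∉ T := fun h => by
      have := hkmax _ h; have := hmem k hkT; omega
    have hMk : M = |v k| + ∑ j ∈ T.erase k, |v j| := (Finset.add_sum_erase T _ hkT).symm
    have hQk : Q = ∑ j ∈ T.erase k, |v (2 * j)| := by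
      rw [hQ, ← Finset.add_sum_erase T _ hkT, hzero k hkT hk2]; simp
    have hcard : (T.erase k).card = s - 1 := by rw [Finset.card_erase_of_mem hkT, hTs]
    have hvk := hhalf k hkT hk2
    obtain rfl | rfl : s = 2 ∨ s = 3 := by omega
    · obtain ⟨a, ha⟩ := Finset.card_eq_one.1 hcard
      have haT : a ∈ T ∧ a ≠ k := by
        have : a ∈ T.erase k := by rw [ha]; simp
        exact ⟨Finset.mem_of_mem_erase this, Finset.ne_of_mem_erase this⟩
      have hTmem : ∀ j ∈ T, j = a ∨ j = k := by
        intro j hj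
        by_cases hjk : j = k
        · exact Or.inr hjk
        · left
          have : j ∈ T.erase k := Finset.mem_erase.2 ⟨hjk, hj⟩
          rwa [ha, Finset.mem_singleton] at this
      rw [ha, Finset.sum_singleton] at hMk hQk
      have ha1 := hmem a haT.1
      have hak := hkmax a haT.1
      have hk1 := hmem k hkT
      by_cases hchain : 2 * a = k
      · have h3 : v (3 * a) = 0 := hvT _ (by omega) (by omega) fun h => by
          rcases hTmem _ h with h | h <;> omega
        have h4 : v (4 * a) = 0 := hvT _ (by omega) (by omega) fun h => by
          rcases hTmem _ h with h | h <;> omega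
        have h5 := toeplitz_abs_add_abs_two_mul_le hC hv0 hCv (by omega) h3 h4
        have h6 := hle2 a haT.1
        rw [hchain] at h5
        exact hfinish (κ := 13 / 8) (M₁ := 5 / 4) (Q₁ := 1) (by norm_num) (by linarith)
          (by linarith) (by norm_num) (by norm_num)
      · have h2a : 2 * a ∉ T := fun h => by rcases hTmem _ h with h | h <;> omega
        have h5 := hhalf a haT.1 h2a
        rw [hzero a haT.1 h2a, abs_zero] at hQk
        exact hfinish (κ := 7 / 5) (M₁ := 17 / 12) (Q₁ := 0) (by norm_num) (by linarith)
          (by linarith) (by norm_num) (by norm_num)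
    · have hne : (T.erase k).Nonempty := Finset.card_pos.1 (by omega)
      obtain ⟨b, hb, hbmax⟩ : ∃ b ∈ T.erase k, ∀ j ∈ T.erase k, j ≤ b :=
        ⟨(T.erase k).max' hne, (T.erase k).max'_mem hne, fun j hj => (T.erase k).le_max' j hj⟩
      have hbT := Finset.mem_of_mem_erase hb
      have hcard' : (((T.erase k).erase b).card : ℝ) = 1 := by
        rw [Finset.card_erase_of_mem hb, hcard]; norm_num
      have hb2 : |v (2 * b)| ≤ 17 / 24 := by
        by_cases h : 2 * b = k
        · rw [h]; exact hvk
        · have : 2 * b ∉ T := fun h' => by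
            have := hbmax _ (Finset.mem_erase.2 ⟨h, h'⟩)
            have := hmem b hbT
            omega
          rw [hzero b hbT this]; norm_num
      have hMb : ∑ j ∈ T.erase k, |v j| ≤ 2 := by
        calc _ ≤ ∑ _j ∈ T.erase k, (1 : ℝ) :=
              Finset.sum_le_sum fun j hj => hle1 j (Finset.mem_of_mem_erase hj)
          _ = 2 := by simp [hcard]
      have hQb : ∑ j ∈ (T.erase k).erase b, |v (2 * j)| ≤ 1 := by
        calc _ ≤ ∑ _j ∈ (T.erase k).erase b, (1 : ℝ) := Finset.sum_le_sum fun j hj =>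
              hle2 j (Finset.mem_of_mem_erase (Finset.mem_of_mem_erase hj))
          _ = 1 := by simpa using hcard'
      rw [← Finset.add_sum_erase _ _ hb] at hQk
      exact hfinish (κ := 9 / 4) (M₁ := 65 / 24) (Q₁ := 41 / 24) (by norm_num) (by linarith)
        (by linarith) (by norm_num) (by norm_num)
  · have h4' : (4 : ℝ) ≤ s := by exact_mod_cast h4
    have hMs : M ≤ s := by
      calc M ≤ ∑ _j ∈ T, (1 : ℝ) := Finset.sum_le_sum hle1
        _ = s := by simp [hTs]
    have hQs : Q ≤ s := by
      calc Q ≤ ∑ _j ∈ T, (1 : ℝ) := Finset.sum_le_sum hle2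
        _ = s := by simp [hTs]
    refine hfinish (κ := s - 1) (by linarith) hMs hQs ?_ ?_
    · nlinarith [mul_nonneg (by linarith : (0 : ℝ) ≤ s) (by linarith : (0 : ℝ) ≤ s - 4)]
    · nlinarith

lemma sum_abs_toeplitz_row_le {p : ℕ} {C : Matrix (Fin p) (Fin p) ℝ} {v : ℕ → ℝ} (hv0 : v 0 = 1)
    (hCv : ∀ i k : Fin p, C i k = v ((i : ℤ) - (k : ℤ)).natAbs) {T : Finset ℕ}
    (hvT : ∀ j, 1 ≤ j → j ≤ p - 1 → j ∉ T → v j = 0) (i : Fin p) :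
    ∑ k, |C i k| ≤ 1 + 2 * ∑ j ∈ T, |v j| := by
  have h : ∀ k : Fin p, |C i k| ≤ (if (k : ℤ) = i then (1 : ℝ) else 0) +
      ∑ j ∈ T, |v j| * (if ((i : ℤ) - (k : ℤ)).natAbs = j then (1 : ℝ) else 0) := by
    intro k
    have hnn : 0 ≤ ∑ j ∈ T, |v j| * (if ((i : ℤ) - (k : ℤ)).natAbs = j then (1 : ℝ) else 0) :=
      Finset.sum_nonneg fun j _ => by positivity
    rw [hCv]
    by_cases hik : (k : ℤ) = i
    · rw [if_pos hik, hik, sub_self, Int.natAbs_zero, hv0, abs_one]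
      rw [hik, sub_self, Int.natAbs_zero] at hnn
      linarith
    · rw [if_neg hik, zero_add]
      by_cases hT : ((i : ℤ) - (k : ℤ)).natAbs ∈ T
      · simp [hT]
      · rw [hvT _ (by omega) (by omega) hT, abs_zero]
        exact hnn
  refine (Finset.sum_le_sum fun k _ => h k).trans ?_
  rw [Finset.sum_add_distrib, Finset.sum_comm]
  refine add_le_add (sum_fin_ite_intCast_eq_le_one _) ?_
  rw [Finset.mul_sum]
  refine Finset.sum_le_sum fun j _ => ?_
  rw [← Finset.mul_sum, mul_comm 2]
  exact mul_le_mul_of_nonneg_left (sum_fin_ite_natAbs_sub_eq_le_two i j) (abs_nonneg _)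

lemma deviation_le_signal {s M σ m m' κ ρ : ℝ} (hs : 2 ≤ s) (hM : s * σ ≤ M)
    (hσ : s * m + m' ≤ σ) (hm : 2 * ρ ≤ m) (hm' : 2 * ρ ≤ m') (hρ : 0 ≤ ρ) (hκ : 1 ≤ κ)
    (h : κ + (1 + 2 * M) * M / (2 * s * (s + 1)) ≤ s) :
    s * m ≤ M - 2 * s * κ * ρ - 2 * s * (1 + 2 * M) * ρ ^ 2 := by
  have hs0 : 0 < s := by linarith
  set ρ₁ := M / (2 * s * (s + 1)) with hρ₁
  have hMρ : M = 2 * s * (s + 1) * ρ₁ := by rw [hρ₁]; field_simp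
  have h1 : 2 * (s + 1) * ρ ≤ σ := by nlinarith
  have hρρ₁ : ρ ≤ ρ₁ := by
    rw [hρ₁, le_div_iff₀ (by positivity)]
    nlinarith
  have hM0 : 0 ≤ M := by rw [hMρ]; have := hρ.trans hρρ₁; positivity
  have h2 : κ + (1 + 2 * M) * ρ₁ ≤ s := by rw [hρ₁, ← mul_div_assoc]; exact h
  have h3 : s * m ≤ 2 * (s + 1) * ρ₁ - 2 * ρ := by
    have : σ ≤ M / s := by rw [le_div_iff₀ hs0]; linarith
    have h4 : M / s = 2 * (s + 1) * ρ₁ := by rw [hMρ]; field_simp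
    linarith
  have hκs : 0 ≤ s * κ - 1 := by nlinarith
  have h5 : (s * κ - 1) * ρ ≤ (s * κ - 1) * ρ₁ := mul_le_mul_of_nonneg_left hρρ₁ hκs
  have h6 : s * (1 + 2 * M) * ρ ^ 2 ≤ s * (1 + 2 * M) * ρ₁ ^ 2 := by gcongr
  have h7 : s * ρ₁ * (κ + (1 + 2 * M) * ρ₁) ≤ s * ρ₁ * s :=
    mul_le_mul_of_nonneg_left h2 (by have := hρ.trans hρρ₁; positivity)
  nlinarith

lemma le_choose_of_lt {s S : ℕ} (hs : 1 ≤ s) (hsS : s < S) : S ≤ S.choose s := by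
  obtain ⟨k, rfl⟩ : ∃ k, S = k + 1 := ⟨S - 1, by omega⟩
  obtain ⟨r, rfl⟩ : ∃ r, s = r + 1 := ⟨s - 1, by omega⟩
  clear hs
  induction k generalizing r with
  | zero => omega
  | succ k ih =>
    rw [Nat.choose_succ_succ']
    rcases Nat.lt_or_ge (r + 1) (k + 1) with h | h
    · have h1 := ih r h
      have h2 : 0 < (k + 1).choose r := Nat.choose_pos (by omega)
      omega
    · obtain rfl : r = k := by omega
      have h1 : (r + 1).choose r = r + 1 := Nat.choose_succ_self_right r
      have h2 : (r + 1).choose (r + 1) = 1 := Nat.choose_self _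
      omega

/-- Type I error of the scan test over `s`-subsets of lags at threshold `s * m`. -/
lemma iidGaussian_one_scan_reject_le {n p s S : ℕ} (hn : 0 < n) (hs : 0 < s) (hSp : S < p)
    {ρ m : ℝ} (hρ : 0 ≤ ρ) (hm : 3 / 2 * ρ + 2 * ρ ^ 2 ≤ m) :
    iidGaussian n p 1 {X | ∃ T : Finset ℕ, T ⊆ Finset.Icc 1 S ∧ T.card = s ∧
        (∑ j ∈ T, |Matrix.trace (lagMatrix p j * (sampleCov X - 1))|) ≥ s * m} ≤
      ENNReal.ofReal (S * (2 * exp (-(n * ((p : ℝ) - S) * ρ ^ 2)))) := by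
  have hsub : {X : Fin n → Fin p → ℝ | ∃ T : Finset ℕ, T ⊆ Finset.Icc 1 S ∧ T.card = s ∧
      (∑ j ∈ T, |Matrix.trace (lagMatrix p j * (sampleCov X - 1))|) ≥ s * m} ⊆
      ⋃ j ∈ Finset.Icc 1 S, {X | m ≤ |Matrix.trace (lagMatrix p j * (sampleCov X - 1))|} := by
    rintro X ⟨T, hT, hTs, hX⟩
    have hTne : T.Nonempty := Finset.card_pos.1 (by omega)
    obtain ⟨j, hj, hmj⟩ := Finset.exists_le_of_sum_le hTne
      (f := fun _ => m) (g := fun j => |Matrix.trace (lagMatrix p j * (sampleCov X - 1))|)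
      (by simpa [hTs] using hX)
    exact Set.mem_biUnion (hT hj) hmj
  calc _ ≤ _ := measure_mono hsub
    _ ≤ _ := measure_biUnion_finset_le _ _
    _ ≤ ∑ _j ∈ Finset.Icc 1 S, ENNReal.ofReal (2 * exp (-(n * ((p : ℝ) - S) * ρ ^ 2))) :=
      Finset.sum_le_sum fun j hj => by
        obtain ⟨h1, h2⟩ := Finset.mem_Icc.1 hj
        exact iidGaussian_one_abs_lag_tail hn hSp h1 h2 hρ hm
    _ = _ := by
      rw [← ENNReal.ofReal_sum_of_nonneg (fun _ _ => by positivity)]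
      simp

/-- Type II error of the scan test over `s`-subsets of lags at threshold `s * m`. -/
lemma iidGaussian_scan_accept_le {n p s S : ℕ} (hn : 0 < n) (hs : 2 ≤ s) (hSp : 2 * S < p)
    {σ m m' ρ : ℝ} (hσ : s * m + m' ≤ σ) (hm : 2 * ρ ≤ m) (hm' : 2 * ρ ≤ m') (hρ : 0 ≤ ρ)
    {C : Matrix (Fin p) (Fin p) ℝ} (hC : memF p s S σ 1 C) :
    iidGaussian n p C {X | ∀ T : Finset ℕ, T ⊆ Finset.Icc 1 S → T.card = s →
        (∑ j ∈ T, |Matrix.trace (lagMatrix p j * (sampleCov X - 1))|) < s * m} ≤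
      ENNReal.ofReal (exp (-(n * ((p : ℝ) - S) * ρ ^ 2))) := by
  obtain ⟨hCpos, v, hv0, hCv, T, hT, hTs, hσv, hvT⟩ := hC
  have hTne : T.Nonempty := Finset.card_pos.1 (by omega)
  obtain ⟨κ, hκ1, hκR, hκs⟩ := exists_deviation_factor hs hSp hCpos hv0 hCv hT hTs hvT
  have hM : (s : ℝ) * σ ≤ ∑ j ∈ T, |v j| := by
    have := Finset.card_nsmul_le_sum T (fun j => |v j|) σ hσv
    rwa [hTs, nsmul_eq_mul] at this
  have hdev := deviation_le_signal (by exact_mod_cast hs) hM hσ hm hm' hρ hκ1 hκs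
  have hε : ∀ x : ℝ, |(SignType.sign x : ℝ)| ≤ 1 := fun x => by
    rcases lt_trichotomy x 0 with h | h | h <;> simp [h]
  have hR0 : 0 ≤ 1 + 2 * ∑ j ∈ T, |v j| := by positivity
  refine le_trans (measure_mono fun X hX => ?_)
    (iidGaussian_signed_lag_sum_tail hn (by omega) hCpos hv0 hCv hT hTne
      (κ := κ) (ε := fun j => (SignType.sign (v j) : ℝ)) (fun j => hε (v j)) hR0
      (sum_abs_toeplitz_row_le hv0 hCv hvT) (by linarith)
      (by rw [hTs]; exact hκR) hρ)
  have hXT := hX T hT hTs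
  have hle : ∑ j ∈ T, (SignType.sign (v j) : ℝ) *
      Matrix.trace (lagMatrix p j * (sampleCov X - 1)) ≤
      ∑ j ∈ T, |Matrix.trace (lagMatrix p j * (sampleCov X - 1))| :=
    Finset.sum_le_sum fun j _ => (le_abs_self _).trans <| by
      rw [abs_mul]
      exact mul_le_of_le_one_left (abs_nonneg _) (hε _)
  have hsum : ∑ j ∈ T, (SignType.sign (v j) : ℝ) * v j = ∑ j ∈ T, |v j| :=
    Finset.sum_congr rfl fun j _ => sign_mul_self _
  simp only [Set.mem_ofPred_eq, hsum, hTs]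
  linarith

/-- Risk bound for the two-sided highly-sparse (scan) test `Δ^{HS}`. -/
theorem test_HS_risk {p n s S : ℕ} (hn : 0 < n) (hs : 2 ≤ s) (hsS : s < S)
    (hS : (S : ℝ) < (p:ℝ)/2) (u σ t : ℝ) (hu : 1 < u)
    (ht : t = (s : ℝ) * max (Real.sqrt (4 * u * Real.log (s * S.choose s) / (n * ((p:ℝ) - S))))
        (8 * u * Real.log (s * S.choose s) / (n * ((p:ℝ) - S))))
    (hσ : σ ≥ t + max
        (Real.sqrt (4 * (u - 1) * Real.log ((s : ℝ) * (2 * s + 1) * (S.choose s : ℝ)) /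
          (n * ((p:ℝ) - S))))
        (8 * (u - 1) * Real.log ((s : ℝ) * (2 * s + 1) * (S.choose s : ℝ)) /
          (n * ((p:ℝ) - S)))) :
    (iidGaussian n p 1) {X | ∃ T : Finset ℕ, T ⊆ Finset.Icc 1 S ∧ T.card = s ∧
        (∑ j ∈ T, |Matrix.trace (lagMatrix p j * (sampleCov X - 1))|) ≥ t}
    + ⨆ (Cov : Matrix (Fin p) (Fin p) ℝ) (_ : memF p s S σ 1 Cov),
        (iidGaussian n p Cov) {X | ∀ T : Finset ℕ, T ⊆ Finset.Icc 1 S → T.card = s →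
          (∑ j ∈ T, |Matrix.trace (lagMatrix p j * (sampleCov X - 1))|) < t}
    ≤ ENNReal.ofReal (4 * Real.exp (-(u - 1) * Real.log (s * S.choose s))) := by
  have hSp : 2 * S < p := by
    have : (2 * S : ℝ) < p := by linarith
    exact_mod_cast this
  have hn' : (0 : ℝ) < n := by exact_mod_cast hn
  have hs' : (2 : ℝ) ≤ s := by exact_mod_cast hs
  have hq : 0 < (p : ℝ) - S := by
    have : (S : ℝ) < p := by exact_mod_cast (by omega : S < p)
    linarith
  have hSC : (S : ℝ) ≤ S.choose s := by exact_mod_cast le_choose_of_lt (by omega) hsS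
  have hC1 : (1 : ℝ) ≤ S.choose s := by exact_mod_cast Nat.choose_pos hsS.le
  have hsC : (1 : ℝ) < s * S.choose s := by nlinarith
  have hL : 0 < Real.log (s * S.choose s) := Real.log_pos hsC
  have hLL' : Real.log (s * S.choose s) ≤
      Real.log ((s : ℝ) * (2 * s + 1) * (S.choose s : ℝ)) :=
    Real.log_le_log (by linarith) (by nlinarith)
  have hSexp : (S : ℝ) ≤ exp (Real.log (s * S.choose s)) := by
    rw [Real.exp_log (by linarith)]; nlinarith
  set L := Real.log (s * S.choose s)
  set L' := Real.log ((s : ℝ) * (2 * s + 1) * (S.choose s : ℝ))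
  set N := (n : ℝ) * ((p : ℝ) - S) with hN
  have hN0 : 0 < N := by positivity
  have hsqrt : ∀ x : ℝ, 2 * √x = √(4 * x) := fun x => by
    rw [Real.sqrt_mul (by norm_num), show (4 : ℝ) = 2 ^ 2 by norm_num,
      Real.sqrt_sq (by norm_num)]
  set m := max √(4 * u * L / N) (8 * u * L / N)
  have hρu : √(u * L / N) ^ 2 = u * L / N := Real.sq_sqrt (by positivity)
  have hu' : 0 < u - 1 := by linarith
  have hρ : √((u - 1) * L / N) ^ 2 = (u - 1) * L / N := Real.sq_sqrt (by positivity)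
  have hmu : 2 * √(u * L / N) ≤ m := by
    rw [hsqrt]
    exact (Real.sqrt_le_sqrt (by ring_nf; rfl)).trans (le_max_left _ _)
  have hmu' : 8 * √(u * L / N) ^ 2 ≤ m := by
    rw [hρu]
    exact le_trans (by ring_nf; rfl) (le_max_right _ _)
  have hm0 : 0 ≤ √(u * L / N) := Real.sqrt_nonneg _
  have hm : 3 / 2 * √(u * L / N) + 2 * √(u * L / N) ^ 2 ≤ m := by linarith
  have hI := iidGaussian_one_scan_reject_le hn (by omega : 0 < s) (by omega : S < p) hm0 hm
  have hII : ∀ C, memF p s S σ 1 C → _ := fun C hC =>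
    iidGaussian_scan_accept_le (ρ := √((u - 1) * L / N)) hn hs hSp (ht ▸ hσ)
      (le_trans (by gcongr; linarith) hmu)
      (by
        rw [hsqrt]
        refine (Real.sqrt_le_sqrt ?_).trans (le_max_left _ _)
        rw [← mul_div_assoc, ← mul_assoc]
        gcongr) (Real.sqrt_nonneg _) hC
  rw [← ht] at hI hII
  calc _ ≤ _ := add_le_add hI (iSup₂_le hII)
    _ = ENNReal.ofReal (S * (2 * exp (-(u * L))) + exp (-((u - 1) * L))) := by
      rw [← ENNReal.ofReal_add (by positivity) (by positivity), hρu, hρ, ← hN,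
        mul_div_cancel₀ _ hN0.ne', mul_div_cancel₀ _ hN0.ne']
    _ ≤ _ := by
      apply ENNReal.ofReal_le_ofReal
      have h1 : S * exp (-(u * L)) ≤ exp (-(u - 1) * L) := by
        calc _ ≤ exp L * exp (-(u * L)) := by gcongr
          _ = _ := by rw [← Real.exp_add]; ring_nf
      have h2 : exp (-((u - 1) * L)) = exp (-(u - 1) * L) := by ring_nf
      have h3 := Real.exp_pos (-(u - 1) * L)
      linarith
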